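/- arXiv:2605.08341 — 3 statements merged into one kernel-verified Lean document; each statement's English description precedes it below -/
import Mathlib

section
/- Fix N ≥ 1 and a real number p. With |GHZ_N⟩ = (|0⟩^{⊗N} + |1⟩^{⊗N})/√2, O = Σ_{j=0}^{N−1} Z_j, and Φ = E_0 ∘ ⋯ ∘ E_{N−1} where E_j(A) = (1−p)·A + p·X_j·A·X_j, one has ⟨GHZ_N| Φ(O²) |GHZ_N⟩ = (1−2p)²·N² + 4p(1−p)·N. Consequently the quantum Fisher information of the GHZ probe under i.i.d. X noise, equal to four times this quantity, is F_{q,X} = 4(1−2p)²N² + 16p(1−p)N. -/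
/-! The operator `O²` is diagonal in the computational basis: `O² = ∑ⱼ ∑ₖ Zⱼ Zₖ`. Conjugation by
`X_i` flips the `i`-th bit of a diagonal operator, hence multiplies `Zⱼ Zₖ` by `-1` exactly when
`i` is one of `j ≠ k`. So every `Zⱼ Zₖ` is an eigenvector of each `E_i` (`noise_zz`), and of the
composition `Φ` with eigenvalue `1` if `j = k` and `(1 - 2p)²` if `j ≠ k` (`prod_noiseFactor`).
Since `Zⱼ Zₖ` has expectation `1` in the GHZ state (`ghz_expect_diagonal`), the claim is
`N + N (N - 1) (1 - 2p)²`, a rewriting of the right-hand side. -/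

open Matrix

/-- The single-qubit Pauli `X` matrix. -/
def X2 : Matrix (Fin 2) (Fin 2) ℂ := !![0, 1; 1, 0]

/-- The single-qubit Pauli `Z` matrix. -/
def Z2 : Matrix (Fin 2) (Fin 2) ℂ := !![1, 0; 0, -1]

/-- The operator on `(ℂ²)^{⊗N}` acting as `M` on the tensor factor `j` and as the
identity elsewhere. -/
def localOp {N : ℕ} (j : Fin N) (M : Matrix (Fin 2) (Fin 2) ℂ) :
    Matrix (Fin N → Fin 2) (Fin N → Fin 2) ℂ :=
  Matrix.of fun f g => ∏ k, if k = j then M (f k) (g k) else if f k = g k then 1 else 0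

/-- The composition `E 0 ∘ E 1 ∘ ⋯ ∘ E (N-1)`. -/
def iidComp {α : Type*} {N : ℕ} (E : Fin N → α → α) : α → α :=
  (List.finRange N).foldr (fun j f => E j ∘ f) id

/-- The `N`-qubit GHZ state `(|0⟩^{⊗N} + |1⟩^{⊗N})/√2` as a vector in `(ℂ²)^{⊗N}`. -/
noncomputable def ghz (N : ℕ) : (Fin N → Fin 2) → ℂ := fun f =>
  ((if f = fun _ => 0 then 1 else 0) + (if f = fun _ => 1 then 1 else 0)) / (Real.sqrt 2 : ℂ)

/-- The basis label `f` with its `j`-th bit flipped. -/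
def flipBit {N : ℕ} (j : Fin N) (f : Fin N → Fin 2) : Fin N → Fin 2 :=
  Function.update f j (1 - f j)

lemma flipBit_flipBit {N : ℕ} (j : Fin N) (f : Fin N → Fin 2) :
    flipBit j (flipBit j f) = f := by
  simp [flipBit]

/-- The eigenvalue `±1` of the Pauli `Z` on the basis vector labelled by a bit. -/
def zSign (b : Fin 2) : ℂ := if b = 0 then 1 else -1

lemma zSign_mul_self (b : Fin 2) : zSign b * zSign b = 1 := by
  unfold zSign; split_ifs <;> norm_num

lemma zSign_one_sub (b : Fin 2) : zSign (1 - b) = -zSign b := by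
  fin_cases b <;> simp [zSign]

lemma localOp_Z2 {N : ℕ} (j : Fin N) :
    localOp j Z2 = diagonal fun f => zSign (f j) := by
  ext f g
  by_cases h : f = g
  · subst h
    have hz : ∀ b, Z2 b b = zSign b := by
      intro b; fin_cases b <;> simp [Z2, zSign]
    simp [localOp, hz]
  · rw [diagonal_apply_ne _ h]
    obtain ⟨k, hk⟩ := Function.ne_iff.mp h
    refine Finset.prod_eq_zero (Finset.mem_univ k) ?_
    split_ifs with hkj
    · have hz : ∀ a b : Fin 2, a ≠ b → Z2 a b = 0 := by
        intro a b hab; fin_cases a <;> fin_cases b <;> simp_all [Z2]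
      exact hz _ _ hk
    · rfl

lemma localOp_X2_apply {N : ℕ} (j : Fin N) (f g : Fin N → Fin 2) :
    localOp j X2 f g = if g = flipBit j f then 1 else 0 := by
  have hx : ∀ a b : Fin 2, X2 a b = if b = 1 - a then 1 else 0 := by
    intro a b; fin_cases a <;> fin_cases b <;> simp [X2]
  simp only [localOp, of_apply]
  split_ifs with h
  · subst h
    refine Finset.prod_eq_one fun k _ => ?_
    by_cases hk : k = j
    · subst hk; simp [flipBit, hx]
    · simp [flipBit, hk]
  · obtain ⟨k, hk⟩ := Function.ne_iff.mp h
    refine Finset.prod_eq_zero (Finset.mem_univ k) ?_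
    by_cases hkj : k = j
    · subst hkj
      simpa [flipBit, hx] using hk
    · simpa [flipBit, hkj, eq_comm] using hk

lemma X2_conj_diagonal {N : ℕ} (j : Fin N) (d : (Fin N → Fin 2) → ℂ) :
    localOp j X2 * diagonal d * localOp j X2 = diagonal fun f => d (flipBit j f) := by
  ext f g
  simp only [mul_apply, localOp_X2_apply, ite_mul, one_mul, zero_mul,
    Finset.sum_ite_eq', Finset.sum_ite_eq, Finset.mem_univ, if_true, flipBit_flipBit,
    diagonal_apply]
  simp [eq_comm]

/-- The operator `Zⱼ Zₖ`, as a diagonal matrix. -/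
def zz {N : ℕ} (j k : Fin N) : Matrix (Fin N → Fin 2) (Fin N → Fin 2) ℂ :=
  diagonal fun f => zSign (f j) * zSign (f k)

/-- The eigenvalue of the noise on qubit `i` at the operator `Zⱼ Zₖ`. For `j = k` this operator is
the identity, which the noise fixes. -/
def noiseFactor {N : ℕ} (p : ℝ) (j k i : Fin N) : ℂ :=
  if j ≠ k ∧ (i = j ∨ i = k) then 1 - 2 * p else 1

lemma noise_zz {N : ℕ} (p : ℝ) (i j k : Fin N) :
    ((1 - p : ℝ) : ℂ) • zz j k + (p : ℂ) • (localOp i X2 * zz j k * localOp i X2) =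
      noiseFactor p j k i • zz j k := by
  unfold zz
  rw [X2_conj_diagonal, ← diagonal_smul, ← diagonal_smul, ← diagonal_smul, diagonal_add]
  congr 1
  funext f
  simp only [Pi.smul_apply, smul_eq_mul, noiseFactor]
  by_cases hjk : j = k
  · subst hjk
    simp [zSign_mul_self]
  · by_cases hj : i = j
    · subst hj
      simp [hjk, flipBit, zSign_one_sub, Function.update_of_ne (Ne.symm hjk)]
      ring
    · by_cases hk : i = k
      · subst hk
        simp [hjk, flipBit, zSign_one_sub]
        ring
      · simp [hj, hk, flipBit, Function.update_of_ne (Ne.symm hj),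
          Function.update_of_ne (Ne.symm hk)]
        ring

/-- The noise on any list of qubits acts on a combination of the `Zⱼ Zₖ` term by term, each term
being scaled by the product of its eigenvalues. -/
lemma foldr_noise {N : ℕ} (p : ℝ) (L : List (Fin N)) :
    L.foldr (fun j f => (fun A : Matrix (Fin N → Fin 2) (Fin N → Fin 2) ℂ =>
        ((1 - p : ℝ) : ℂ) • A + (p : ℂ) • (localOp j X2 * A * localOp j X2)) ∘ f) id
      (∑ j, ∑ k, zz j k) = ∑ j, ∑ k, (L.map (noiseFactor p j k)).prod • zz j k := by
  induction L with
  | nil => simp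
  | cons i L ih =>
    rw [List.foldr_cons, Function.comp_apply, ih]
    simp only [Finset.mul_sum, Finset.sum_mul, Finset.smul_sum, ← Finset.sum_add_distrib]
    refine Finset.sum_congr rfl fun j _ => Finset.sum_congr rfl fun k _ => ?_
    rw [List.map_cons, List.prod_cons, mul_comm (noiseFactor p j k i), mul_smul, ← noise_zz,
      Matrix.mul_smul, Matrix.smul_mul, smul_add, smul_comm _ (p : ℂ),
      smul_comm _ ((1 - p : ℝ) : ℂ)]

lemma prod_noiseFactor {N : ℕ} (p : ℝ) (j k : Fin N) :
    ((List.finRange N).map (noiseFactor p j k)).prod =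
      if j = k then 1 else (1 - 2 * (p : ℂ)) ^ 2 := by
  rw [← List.ofFn_eq_map, List.prod_ofFn]
  split_ifs with h
  · simp [noiseFactor, h]
  · have hf : (Finset.univ.filter fun i : Fin N => i = j ∨ i = k) = {j, k} := by
      ext i; simp
    simp only [noiseFactor, ne_eq, h, not_false_eq_true, true_and]
    rw [← Finset.prod_filter, hf, Finset.prod_const, Finset.card_pair h]

lemma sum_Z2_sq {N : ℕ} :
    (∑ j : Fin N, localOp j Z2) * (∑ j : Fin N, localOp j Z2) = ∑ j : Fin N, ∑ k, zz j k := by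
  simp only [Finset.sum_mul_sum, localOp_Z2, diagonal_mul_diagonal, zz]

/-- For at least one qubit the two branches of the GHZ state are distinct basis vectors, each of
weight `1/2`. -/
lemma ghz_expect_diagonal {N : ℕ} (hN : 1 ≤ N) (d : (Fin N → Fin 2) → ℂ) :
    star (ghz N) ⬝ᵥ (diagonal d *ᵥ ghz N) = (d (fun _ => 0) + d (fun _ => 1)) / 2 := by
  have hne : (fun _ : Fin N => (0 : Fin 2)) ≠ fun _ => 1 := fun h => by
    simpa using congrFun h ⟨0, hN⟩
  have hs : (Real.sqrt 2 : ℂ) * (Real.sqrt 2 : ℂ) = 2 := by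
    rw [← Complex.ofReal_mul, Real.mul_self_sqrt (by norm_num)]; norm_num
  have key : ∀ f, star (ghz N f) * (d f * ghz N f) =
      (if f = fun _ => 0 then d f / 2 else 0) + (if f = fun _ => 1 then d f / 2 else 0) := by
    intro f
    have hstar : star (ghz N f) = ghz N f := by
      unfold ghz; split_ifs <;> simp
    have hsq : d f / 2 = 1 / (Real.sqrt 2 : ℂ) * (d f * (1 / (Real.sqrt 2 : ℂ))) := by
      rw [← hs]; ring
    rw [hstar, hsq]
    unfold ghz
    by_cases h0 : f = fun _ => 0
    · have h1 : f ≠ fun _ => 1 := h0 ▸ hne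
      simp only [h0, hne, if_true, if_false, add_zero]
    · by_cases h1 : f = fun _ => 1
      · simp only [h1, hne.symm, if_true, if_false, zero_add]
      · simp [h0, h1]
  simp only [dotProduct, mulVec_diagonal, Pi.star_apply, key, Finset.sum_add_distrib,
    Finset.sum_ite_eq', Finset.mem_univ, if_true]
  ring

lemma ghz_expect_zz {N : ℕ} (hN : 1 ≤ N) (j k : Fin N) :
    star (ghz N) ⬝ᵥ (zz j k *ᵥ ghz N) = 1 := by
  rw [zz, ghz_expect_diagonal hN]
  norm_num [zSign]

/-- For `N ≥ 1`, a real `p`, `O = Σ_j Z_j` and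
`Φ = E_0 ∘ ⋯ ∘ E_{N-1}` with `E_j(A) = (1-p)A + p X_j A X_j`, one has
`⟨GHZ_N| Φ(O²) |GHZ_N⟩ = (1-2p)² N² + 4p(1-p) N`. -/
theorem stmt7 (N : ℕ) (hN : 1 ≤ N) (p : ℝ) :
    star (ghz N) ⬝ᵥ
        ((iidComp (fun j : Fin N => fun A : Matrix (Fin N → Fin 2) (Fin N → Fin 2) ℂ =>
            ((1 - p : ℝ) : ℂ) • A + (p : ℂ) • (localOp j X2 * A * localOp j X2))
          ((∑ j : Fin N, localOp j Z2) * (∑ j : Fin N, localOp j Z2))) *ᵥ ghz N) =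
      (((1 - 2 * p) ^ 2 * (N : ℝ) ^ 2 + 4 * p * (1 - p) * (N : ℝ) : ℝ) : ℂ) := by
  rw [sum_Z2_sq, iidComp, foldr_noise]
  simp only [sum_mulVec, dotProduct_sum, smul_mulVec, dotProduct_smul, ghz_expect_zz hN,
    prod_noiseFactor, smul_eq_mul, mul_one]
  have hrow : ∀ j : Fin N, (∑ k, if j = k then (1 : ℂ) else (1 - 2 * (p : ℂ)) ^ 2) =
      N * (1 - 2 * (p : ℂ)) ^ 2 + (1 - (1 - 2 * (p : ℂ)) ^ 2) := by
    intro j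
    have hsplit : ∀ k, (if j = k then (1 : ℂ) else (1 - 2 * (p : ℂ)) ^ 2) =
        (1 - 2 * (p : ℂ)) ^ 2 + if j = k then 1 - (1 - 2 * (p : ℂ)) ^ 2 else 0 := by
      intro k; split_ifs <;> ring
    simp [hsplit, Finset.sum_add_distrib]
  simp only [hrow, Finset.sum_const, Finset.card_univ, Fintype.card_fin, nsmul_eq_mul]
  push_cast
  ring
end

section
/- Let V be a finite set with |V| = n and let (A_v)_{v∈V} be a family of finite subsets of a set Q such that: |A_v| = 4 for every v; for every v, there are exactly 4 elements w ∈ V with w ≠ v and A_v ∩ A_w ≠ ∅; and whenever v ≠ w and A_v ∩ A_w ≠ ∅, one has |A_v ∩ A_w| = 1. Then for every real number x, Σ_{(v,w) ∈ V×V} x^{|A_v Δ A_w|} = x⁸·n² + (1 + 4x⁶ − 5x⁸)·n, where Δ denotes symmetric difference. -/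
open scoped symmDiff

/-!
Since `|A v ∆ A w| = |A v| + |A w| - 2 |A v ∩ A w|`, the exponent is `0` on the diagonal, `6` for
the four neighbours of `v`, and `8` otherwise. Hence each summand is `x ^ 8` plus a correction
`1 - x ^ 8` on the diagonal plus a correction `x ^ 6 - x ^ 8` on neighbouring pairs, and for fixed
`v` the inner sum is `n x ^ 8 + (1 - x ^ 8) + 4 (x ^ 6 - x ^ 8)`.
-/

theorem card_symmDiff_add_two_mul_card_inter {Q : Type*} [DecidableEq Q] (s t : Finset Q) :
    (s ∆ t).card + 2 * (s ∩ t).card = s.card + t.card := by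
  have h : (s ∆ t).card = (s \ t).card + (t \ s).card :=
    Finset.card_union_of_disjoint disjoint_sdiff_sdiff
  have h₁ := Finset.card_sdiff_add_card_inter s t
  have h₂ := Finset.card_sdiff_add_card_inter t s
  rw [Finset.inter_comm t s] at h₂
  lia

/-- Let `V` be a finite set with `|V| = n` and `(A v)_{v ∈ V}` a family of
finite subsets of `Q` such that each `A v` has 4 elements, each `v` has exactly 4 elements
`w ≠ v` with `A v ∩ A w ≠ ∅`, and any two distinct intersecting sets intersect in exactly
one element. Then for every real `x`,
`Σ_{(v,w)} x^{|A v ∆ A w|} = x⁸ n² + (1 + 4x⁶ - 5x⁸) n`. -/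
theorem stmt8 {V Q : Type*} [Fintype V] [DecidableEq V] [DecidableEq Q]
    (n : ℕ) (hV : Fintype.card V = n) (A : V → Finset Q)
    (hsize : ∀ v, (A v).card = 4)
    (hnbrs : ∀ v, (Finset.univ.filter fun w => w ≠ v ∧ (A v ∩ A w).Nonempty).card = 4)
    (hint : ∀ v w, v ≠ w → (A v ∩ A w).Nonempty → (A v ∩ A w).card = 1)
    (x : ℝ) :
    ∑ vw : V × V, x ^ (A vw.1 ∆ A vw.2).card =
      x ^ 8 * (n : ℝ) ^ 2 + (1 + 4 * x ^ 6 - 5 * x ^ 8) * (n : ℝ) := by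
  have key : ∀ v w, x ^ (A v ∆ A w).card = x ^ 8 + (if w = v then 1 - x ^ 8 else 0)
      + (if w ≠ v ∧ (A v ∩ A w).Nonempty then x ^ 6 - x ^ 8 else 0) := by
    intro v w
    by_cases hwv : w = v
    · subst hwv
      simp
    have hc := card_symmDiff_add_two_mul_card_inter (A v) (A w)
    rw [hsize, hsize] at hc
    by_cases hne : (A v ∩ A w).Nonempty
    · rw [hint v w (Ne.symm hwv) hne] at hc
      have h6 : (A v ∆ A w).card = 6 := by lia
      simp [hwv, hne, h6]
    · have h0 : (A v ∩ A w).card = 0 := by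
        rw [Finset.card_eq_zero, ← Finset.not_nonempty_iff_eq_empty]
        exact hne
      have h8 : (A v ∆ A w).card = 8 := by lia
      simp [hwv, hne, h8]
  have inner : ∀ v, ∑ w, x ^ (A v ∆ A w).card
      = n * x ^ 8 + (1 - x ^ 8) + 4 * (x ^ 6 - x ^ 8) := by
    intro v
    simp only [key, Finset.sum_add_distrib]
    rw [← Finset.sum_filter (fun w => w ≠ v ∧ (A v ∩ A w).Nonempty), Finset.sum_const,
      Finset.sum_const, hnbrs, Finset.card_univ, hV, Finset.sum_ite_eq' Finset.univ v]
    simp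
  rw [Fintype.sum_prod_type]
  simp only [inner, Finset.sum_const, Finset.card_univ, hV, nsmul_eq_mul]
  ring
end

section
/- Fix N ≥ 1 and real numbers p_x, p_y, p_z. Let T be an operator on the N-qubit space (a 2^N × 2^N complex matrix) such that for every site j, T·X_j = X_j·T, T·Y_j = −Y_j·T, and T·Z_j = −Z_j·T, where X_j, Y_j, Z_j act as the Pauli matrices X, Y, Z on factor j and identity elsewhere. For each j let E_j(ρ) = (1−p_x−p_y−p_z)·ρ + p_x·X_j ρ X_j + p_y·Y_j ρ Y_j + p_z·Z_j ρ Z_j, and let D_j(ρ) = (1−p_y−p_z)·ρ + (p_y+p_z)·Z_j ρ Z_j. Then for every 2^N × 2^N matrix ρ, Tr[T · (E_0∘⋯∘E_{N−1})(ρ)] = (1 − 2(p_y+p_z))^N · Tr[T·ρ] = Tr[T · (D_0∘⋯∘D_{N−1})(ρ)]. -/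
/-!
Each Pauli matrix squares to the identity, hence so does its local version `P_j`
(`localOp_mul_self`). If `T P_j = ± P_j T`, then cyclicity of the trace gives
`Tr[T P_j σ P_j] = Tr[P_j T P_j σ] = ± Tr[T σ]` (`trace_conj_of_comm`, `trace_conj_of_anticomm`).
So in the expectation of `T` a Pauli channel at one site acts as multiplication by the scalar
`(1 - px - py - pz) + px - py - pz = 1 - 2 (py + pz)`, and the dephasing channel of strength
`py + pz` as multiplication by the same scalar. Composing over the `N` sites raises this scalar
to the power `N` (`trace_iidComp`).
-/

open Matrix

/-- The single-qubit Pauli `Y` matrix. -/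
def Y2 : Matrix (Fin 2) (Fin 2) ℂ := !![0, -Complex.I; Complex.I, 0]

/-- Entrywise, the square of `localOp j M` is a sum over configurations of a product over sites,
so it factors into a product over sites of single-site matrix squares. -/
theorem localOp_mul_self {N : ℕ} (j : Fin N) {M : Matrix (Fin 2) (Fin 2) ℂ} (hM : M * M = 1) :
    localOp j M * localOp j M = 1 := by
  have key : ∀ (k : Fin N) (a b : Fin 2),
      ∑ c, (if k = j then M a c else if a = c then 1 else 0) *
        (if k = j then M c b else if c = b then 1 else 0) = if a = b then (1 : ℂ) else 0 := by
    intro k a b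
    by_cases hk : k = j
    · simpa [hk, Matrix.mul_apply, Matrix.one_apply] using congrFun (congrFun hM a) b
    · simp [hk]
  ext f h
  simp only [localOp, Matrix.mul_apply, Matrix.of_apply, ← Finset.prod_mul_distrib]
  rw [← Fintype.prod_sum (fun k c => (if k = j then M (f k) c else if f k = c then 1 else 0) *
        (if k = j then M c (h k) else if c = h k then 1 else 0))]
  simp only [key, Matrix.one_apply]
  by_cases hfh : f = h
  · simp [hfh]
  · obtain ⟨k, hk⟩ := Function.ne_iff.mp hfh
    rw [if_neg hfh]
    exact Finset.prod_eq_zero (Finset.mem_univ k) (if_neg hk)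

theorem X2_mul_self : X2 * X2 = 1 := by
  simp [X2, Matrix.one_fin_two]

theorem Y2_mul_self : Y2 * Y2 = 1 := by
  simp [Y2, Matrix.one_fin_two]

theorem Z2_mul_self : Z2 * Z2 = 1 := by
  simp [Z2, Matrix.one_fin_two]

theorem trace_conj_of_comm {n : Type*} [Fintype n] [DecidableEq n] {T P : Matrix n n ℂ}
    (hP : P * P = 1) (h : T * P = P * T) (σ : Matrix n n ℂ) :
    (T * (P * σ * P)).trace = (T * σ).trace := by
  rw [← Matrix.mul_assoc, Matrix.trace_mul_comm, ← Matrix.mul_assoc, ← Matrix.mul_assoc, h.symm,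
    Matrix.mul_assoc T, hP, Matrix.mul_one]

theorem trace_conj_of_anticomm {n : Type*} [Fintype n] [DecidableEq n] {T P : Matrix n n ℂ}
    (hP : P * P = 1) (h : T * P = -(P * T)) (σ : Matrix n n ℂ) :
    (T * (P * σ * P)).trace = -(T * σ).trace := by
  have h' : P * T = -(T * P) := by rw [h, neg_neg]
  rw [← Matrix.mul_assoc, Matrix.trace_mul_comm, ← Matrix.mul_assoc, ← Matrix.mul_assoc, h',
    Matrix.neg_mul, Matrix.mul_assoc T, hP, Matrix.mul_one, Matrix.neg_mul, Matrix.trace_neg]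

/-- If every map `E j` multiplies the functional `σ ↦ Tr[T σ]` by `c`, then the composition of
all `N` of them multiplies it by `c ^ N`. -/
theorem trace_iidComp {N : ℕ} {n : Type*} [Fintype n] (T : Matrix n n ℂ) (c : ℂ)
    (E : Fin N → Matrix n n ℂ → Matrix n n ℂ)
    (hE : ∀ j σ, (T * E j σ).trace = c * (T * σ).trace) (ρ : Matrix n n ℂ) :
    (T * iidComp E ρ).trace = c ^ N * (T * ρ).trace := by
  have key : ∀ l : List (Fin N),
      (T * l.foldr (fun j f => E j ∘ f) id ρ).trace = c ^ l.length * (T * ρ).trace := by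
    intro l
    induction l with
    | nil => simp
    | cons j l ih =>
      rw [List.foldr_cons, Function.comp_apply, hE, ih, List.length_cons, pow_succ']
      ring
  simpa [iidComp] using key (List.finRange N)

/-- Let `T` be an `N`-qubit operator commuting with every `X_j` and
anticommuting with every `Y_j` and `Z_j`. With the i.i.d. Pauli channel
`E_j(ρ) = (1-p_x-p_y-p_z)ρ + p_x X_j ρ X_j + p_y Y_j ρ Y_j + p_z Z_j ρ Z_j` and the
dephasing channel `D_j(ρ) = (1-p_y-p_z)ρ + (p_y+p_z) Z_j ρ Z_j`, for every `ρ`: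
`Tr[T (E_0∘⋯∘E_{N-1})(ρ)] = (1-2(p_y+p_z))^N Tr[Tρ] = Tr[T (D_0∘⋯∘D_{N-1})(ρ)]`. -/
theorem stmt13 (N : ℕ) (hN : 1 ≤ N) (px py pz : ℝ)
    (T : Matrix (Fin N → Fin 2) (Fin N → Fin 2) ℂ)
    (hX : ∀ j : Fin N, T * localOp j X2 = localOp j X2 * T)
    (hY : ∀ j : Fin N, T * localOp j Y2 = -(localOp j Y2 * T))
    (hZ : ∀ j : Fin N, T * localOp j Z2 = -(localOp j Z2 * T))
    (ρ : Matrix (Fin N → Fin 2) (Fin N → Fin 2) ℂ) :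
    (T * iidComp (fun j : Fin N => fun σ : Matrix (Fin N → Fin 2) (Fin N → Fin 2) ℂ =>
          ((1 - px - py - pz : ℝ) : ℂ) • σ + (px : ℂ) • (localOp j X2 * σ * localOp j X2) +
            (py : ℂ) • (localOp j Y2 * σ * localOp j Y2) +
            (pz : ℂ) • (localOp j Z2 * σ * localOp j Z2)) ρ).trace =
        ((1 - 2 * (py + pz) : ℝ) : ℂ) ^ N * (T * ρ).trace ∧
      ((1 - 2 * (py + pz) : ℝ) : ℂ) ^ N * (T * ρ).trace =
        (T * iidComp (fun j : Fin N => fun σ : Matrix (Fin N → Fin 2) (Fin N → Fin 2) ℂ =>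
          ((1 - py - pz : ℝ) : ℂ) • σ +
            ((py + pz : ℝ) : ℂ) • (localOp j Z2 * σ * localOp j Z2)) ρ).trace := by
  have hx := fun j => trace_conj_of_comm (localOp_mul_self j X2_mul_self) (hX j)
  have hy := fun j => trace_conj_of_anticomm (localOp_mul_self j Y2_mul_self) (hY j)
  have hz := fun j => trace_conj_of_anticomm (localOp_mul_self j Z2_mul_self) (hZ j)
  refine ⟨trace_iidComp T _ _ (fun j σ => ?_) ρ, (trace_iidComp T _ _ (fun j σ => ?_) ρ).symm⟩
  · simp only [Matrix.mul_add, Matrix.mul_smul, Matrix.trace_add, Matrix.trace_smul, hx, hy, hz,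
      smul_eq_mul]
    push_cast
    ring
  · simp only [Matrix.mul_add, Matrix.mul_smul, Matrix.trace_add, Matrix.trace_smul, hz,
      smul_eq_mul]
    push_cast
    ring
end
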